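/- Let 𝔤 be a finite-dimensional complex simple Lie algebra with Cartan subalgebra 𝔥, Killing form κ, root system Φ, base Δ, and let α ∈ Δ be a long simple root; set Σ_q := {α} ∪ N(α) and for i ≠ 0 let q_i := ⊕_{ht_{Σ_q}(β)=i} 𝔤_β. Let H_α ∈ 𝔥 be the unique element with α = κ(H_α, ·)|_𝔥. Then for i = 1 and i = 2, the bilinear map q_i × q_{−i} → ℂ given by (Z, X) ↦ κ(H_α, ⁅Z, X⁆) is nondegenerate. -/

import Mathlib

open scoped RealInnerProductSpace Classical

/-!
Since `κ(H_α, ⁅Z, X⁆) = κ(⁅H_α, Z⁆, X)` and the Killing form pairs `q_k` perfectly with `q_{-k}`,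
it suffices that `ad H_α` is injective on `q_k`, i.e. that no root of height `k` vanishes on `H_α`.

Every functional on `E` grades `L` by a derivation, which is inner; hence it is the evaluation of
the roots at some element of `h`. Consequently `h` is a Cartan subalgebra and its roots are exactly
the functionals `ev γ`. The inner product of `E`, however, has to be matched with the Killing form.
If a root `γ` takes a value `m ≠ 0` on the coroot of `α`, then `γ - m α` is again a root, and as
`α` is long this forces `m = ⟨γ, α^∨⟩`. So every root vanishes either on the coroot or on its
difference from the element of `h` realizing `⟨·, α^∨⟩`. By irreducibility one of these two
elements is zero, and it is not the coroot. Therefore `β(H_α) ≠ 0` as soon as `⟨β, α^∨⟩ ≠ 0`.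

Finally `⟨γ, α^∨⟩ = -1` for every Dynkin neighbor `γ` of the long root `α`, so that
`ht(β) = 3 n_α(β) - ⟨β, α^∨⟩`. Thus `⟨β, α^∨⟩ ≠ 0` whenever `3` does not divide `ht(β)`.
-/

section Irreducible

variable {ι R M N : Type*} [CommRing R] [AddCommGroup M] [Module R M] [AddCommGroup N] [Module R N]

theorem span_root_image_apply_ne_zero_eq_top (P : RootPairing ι R M N) [P.IsIrreducible]
    {f : Module.Dual R M} {i₀ : ι} (hi₀ : f (P.root i₀) ≠ 0) :
    Submodule.span R (P.root '' {i | f (P.root i) ≠ 0}) = ⊤ := by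
  refine RootPairing.IsIrreducible.eq_top_of_invtSubmodule_reflection (P := P) _ (fun j ↦ ?_) ?_
  · rw [Module.End.mem_invtSubmodule, Submodule.span_le]
    rintro _ ⟨i, hi : f (P.root i) ≠ 0, rfl⟩
    change P.reflection j (P.root i) ∈ Submodule.span R (P.root '' {i | f (P.root i) ≠ 0})
    by_cases hj : f (P.root j) = 0
    · refine Submodule.subset_span ⟨P.reflectionPerm j i, ?_, P.root_reflectionPerm j i⟩
      simpa [P.root_reflectionPerm, P.reflection_apply, hj] using hi
    · rw [P.reflection_apply]
      exact sub_mem (Submodule.subset_span ⟨i, hi, rfl⟩)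
        (Submodule.smul_mem _ _ (Submodule.subset_span ⟨j, hj, rfl⟩))
  · intro hbot
    have hzero : P.root i₀ = 0 := by
      simpa [hbot] using Submodule.subset_span (R := R)
        (Set.mem_image_of_mem P.root (show i₀ ∈ {i | f (P.root i) ≠ 0} from hi₀))
    exact hi₀ (by rw [hzero, map_zero])

theorem eq_zero_or_eq_zero_of_forall_root (P : RootPairing ι R M N) [P.IsIrreducible]
    [P.IsRootSystem] {f₁ f₂ : Module.Dual R M}
    (hf : ∀ i, f₁ (P.root i) = 0 ∨ f₂ (P.root i) = 0) : f₁ = 0 ∨ f₂ = 0 := by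
  by_cases hf₁ : ∀ i, f₁ (P.root i) = 0
  · exact .inl (LinearMap.ext_on_range RootPairing.IsRootSystem.span_root_eq_top
      (by simpa using hf₁))
  · push Not at hf₁
    obtain ⟨i₀, hi₀⟩ := hf₁
    refine .inr (LinearMap.ext_on (span_root_image_apply_ne_zero_eq_top P hi₀) ?_)
    rintro _ ⟨i, hi, rfl⟩
    exact (hf i).resolve_left hi

end Irreducible

theorem killingForm_eq_zero_of_lie_eq_smul {R L : Type*} [CommRing R] [IsDomain R] [LieRing L]
    [LieAlgebra R L] {D x y : L} {s t : R} (hx : ⁅D, x⁆ = s • x) (hy : ⁅D, y⁆ = t • y)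
    (hst : s + t ≠ 0) : killingForm R L x y = 0 := by
  have hinv : killingForm R L ⁅D, x⁆ y = -killingForm R L x ⁅D, y⁆ :=
    LieModule.traceForm_apply_lie_apply' R L L D x y
  rw [hx, hy, map_smul, map_smul, LinearMap.smul_apply, smul_eq_mul, smul_eq_mul,
    eq_neg_iff_add_eq_zero, ← add_mul] at hinv
  exact (mul_eq_zero.1 hinv).resolve_left hst

theorem eq_zero_of_mem_iSup_eigenspace_of_apply_eq_zero {R M : Type*} [CommRing R] [IsDomain R]
    [AddCommGroup M] [Module R M] [Module.IsTorsionFree R M] {f : Module.End R M} {x : M}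
    (hx : x ∈ ⨆ μ ≠ 0, f.eigenspace μ) (hfx : f x = 0) : x = 0 := by
  have hker : x ∈ f.eigenspace 0 := by simpa [Module.End.mem_eigenspace_iff] using hfx
  exact Submodule.disjoint_def.1 (f.eigenspaces_iSupIndep 0) x hker hx

section Eigenvectors

variable {ι R L : Type*} [CommRing R] [LieRing L] [LieAlgebra R L]

theorem eq_zero_of_mem_iSup_of_lie_eq_zero [IsDomain R] [Module.IsTorsionFree R L]
    {g : ι → Submodule R L} {S : Set ι} {D : L} {c : ι → R} (hc : ∀ i ∈ S, c i ≠ 0)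
    (hsmul : ∀ i ∈ S, ∀ x ∈ g i, ⁅D, x⁆ = c i • x) {x : L} (hx : x ∈ ⨆ i ∈ S, g i)
    (hDx : ⁅D, x⁆ = 0) : x = 0 := by
  have hle : ⨆ i ∈ S, g i ≤ ⨆ μ ≠ 0, (LieAlgebra.ad R L D).eigenspace μ :=
    iSup₂_le fun i hi ↦ le_iSup₂_of_le (c i) (hc i hi) fun y hy ↦
      Module.End.mem_eigenspace_iff.2 (hsmul i hi y hy)
  exact eq_zero_of_mem_iSup_eigenspace_of_apply_eq_zero (hle hx) hDx

theorem lie_mem_iSup_of_lie_eq_smul {g : ι → Submodule R L} {S : Set ι} {D : L}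
    {c : ι → R} (hsmul : ∀ i ∈ S, ∀ x ∈ g i, ⁅D, x⁆ = c i • x) {x : L} (hx : x ∈ ⨆ i ∈ S, g i) :
    ⁅D, x⁆ ∈ ⨆ i ∈ S, g i := by
  have hle : ⨆ i ∈ S, g i ≤ (⨆ i ∈ S, g i).comap (LieAlgebra.ad R L D) := by
    refine iSup₂_le fun i hi y hy ↦ ?_
    rw [Submodule.mem_comap, LieAlgebra.ad_apply, hsmul i hi y hy]
    exact Submodule.smul_mem _ _
      (Submodule.mem_iSup_of_mem i (Submodule.mem_iSup_of_mem hi hy))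
  exact hle hx

end Eigenvectors

section RootDecomposition

variable {E R L : Type*} [AddCommGroup E] [CommRing R] [LieRing L] [LieAlgebra R L]

/-- A root space decomposition `L = h ⊕ ⨁ β ∈ Φ, g β` over a finite set `Φ` of nonzero vectors of
`E`: the subspace `h` is abelian, acts on `g β ≠ ⊥` through the scalars `ev β`, and brackets are
additive in the degrees. Roots are elements of `E`, and `ev` turns them into functions on `h`. -/
structure IsRootDecomposition (Φ : Finset E) (h : Submodule R L) (g : E → Submodule R L)
    (ev : E → L → R) : Prop where
  zero_notMem : (0 : E) ∉ Φ
  lie_eq_zero : ∀ x ∈ h, ∀ y ∈ h, ⁅x, y⁆ = 0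
  ne_bot : ∀ β ∈ Φ, g β ≠ ⊥
  lie_eq_smul : ∀ β ∈ Φ, ∀ x ∈ h, ∀ y ∈ g β, ⁅x, y⁆ = ev β x • y
  lie_mem : ∀ β ∈ Φ, ∀ γ ∈ Φ, ∀ x ∈ g β, ∀ y ∈ g γ,
    (β + γ ∈ Φ → ⁅x, y⁆ ∈ g (β + γ)) ∧ (β + γ = 0 → ⁅x, y⁆ ∈ h) ∧
    (β + γ ∉ Φ → β + γ ≠ 0 → ⁅x, y⁆ = 0)
  sup_eq_top : h ⊔ (⨆ β ∈ Φ, g β) = ⊤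
  disjoint_iSup : Disjoint h (⨆ β ∈ Φ, g β)
  disjoint_sup : ∀ β ∈ Φ, Disjoint (g β) (h ⊔ ⨆ γ ∈ Φ.erase β, g γ)

/-- The grading of `L` by `E` with `h` in degree `0`, `g β` in degree `β ∈ Φ`, and `⊥` in every
other degree. -/
noncomputable def rootGrading (Φ : Finset E) (h : Submodule R L) (g : E → Submodule R L) (e : E) :
    Submodule R L :=
  if e = 0 then h else if e ∈ Φ then g e else ⊥

variable {Φ : Finset E} {h : Submodule R L} {g : E → Submodule R L} {ev : E → L → R}

@[simp]
theorem rootGrading_zero : rootGrading Φ h g 0 = h := if_pos rfl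

theorem mem_rootGrading_cases {e : E} {x : L} (hx : x ∈ rootGrading Φ h g e) :
    (e = 0 ∧ x ∈ h) ∨ (e ∈ Φ ∧ x ∈ g e) ∨ x = 0 := by
  unfold rootGrading at hx
  split_ifs at hx with he₀ heΦ
  · exact .inl ⟨he₀, hx⟩
  · exact .inr (.inl ⟨heΦ, hx⟩)
  · exact .inr (.inr hx)

namespace IsRootDecomposition

theorem ne_zero (hD : IsRootDecomposition Φ h g ev) {β : E} (hβ : β ∈ Φ) : β ≠ 0 :=
  ne_of_mem_of_not_mem hβ hD.zero_notMem

theorem rootGrading_eq (hD : IsRootDecomposition Φ h g ev) {β : E} (hβ : β ∈ Φ) :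
    rootGrading Φ h g β = g β := by
  rw [rootGrading, if_neg (hD.ne_zero hβ), if_pos hβ]

theorem iSupIndep_rootGrading (hD : IsRootDecomposition Φ h g ev) :
    iSupIndep (rootGrading Φ h g) := by
  intro e
  rw [Submodule.disjoint_def]
  intro x hx hx'
  rcases mem_rootGrading_cases hx with ⟨rfl, hxh⟩ | ⟨heΦ, hxg⟩ | rfl
  · have hle : ⨆ j ≠ 0, rootGrading Φ h g j ≤ ⨆ β ∈ Φ, g β := by
      refine iSup₂_le fun j hj y hy ↦ ?_
      rcases mem_rootGrading_cases hy with ⟨rfl, -⟩ | ⟨hjΦ, hyg⟩ | rfl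
      · exact absurd rfl hj
      · exact Submodule.mem_iSup_of_mem j (Submodule.mem_iSup_of_mem hjΦ hyg)
      · exact zero_mem _
    exact Submodule.disjoint_def.1 hD.disjoint_iSup x hxh (hle hx')
  · have hle : ⨆ j ≠ e, rootGrading Φ h g j ≤ h ⊔ ⨆ β ∈ Φ.erase e, g β := by
      refine iSup₂_le fun j hj y hy ↦ ?_
      rcases mem_rootGrading_cases hy with ⟨rfl, hyh⟩ | ⟨hjΦ, hyg⟩ | rfl
      · exact Submodule.mem_sup_left hyh
      · exact Submodule.mem_sup_right (Submodule.mem_iSup_of_mem j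
          (Submodule.mem_iSup_of_mem (Finset.mem_erase.2 ⟨hj, hjΦ⟩) hyg))
      · exact zero_mem _
    exact Submodule.disjoint_def.1 (hD.disjoint_sup e heΦ) x hxg (hle hx')
  · rfl

theorem iSup_rootGrading (hD : IsRootDecomposition Φ h g ev) : ⨆ e, rootGrading Φ h g e = ⊤ := by
  rw [eq_top_iff, ← hD.sup_eq_top]
  exact sup_le (le_iSup_of_le 0 rootGrading_zero.ge)
    (iSup₂_le fun β hβ ↦ le_iSup_of_le β (hD.rootGrading_eq hβ).ge)

theorem lie_mem_rootGrading (hD : IsRootDecomposition Φ h g ev) {i j : E} {x y : L}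
    (hx : x ∈ rootGrading Φ h g i) (hy : y ∈ rootGrading Φ h g j) :
    ⁅x, y⁆ ∈ rootGrading Φ h g (i + j) := by
  rcases mem_rootGrading_cases hx with ⟨rfl, hxh⟩ | ⟨hiΦ, hxg⟩ | rfl <;>
  rcases mem_rootGrading_cases hy with ⟨rfl, hyh⟩ | ⟨hjΦ, hyg⟩ | rfl <;>
  try simp only [lie_zero, zero_lie, zero_mem]
  · rw [hD.lie_eq_zero x hxh y hyh]
    exact zero_mem _
  · rw [zero_add, hD.lie_eq_smul j hjΦ x hxh y hyg]
    exact Submodule.smul_mem _ _ hy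
  · rw [add_zero, ← lie_skew, hD.lie_eq_smul i hiΦ y hyh x hxg]
    exact neg_mem (Submodule.smul_mem _ _ hx)
  · obtain ⟨hroot, hzero, hother⟩ := hD.lie_mem i hiΦ j hjΦ x hxg y hyg
    unfold rootGrading
    split_ifs with hij₀ hijΦ
    exacts [hzero hij₀, hroot hijΦ, hother hijΦ hij₀]

/-- `rootGrading` makes `L` a graded Lie algebra, so that an additive map `E →+ R` induces a
derivation of `L`. Reducible, so that it can serve as a local instance. -/
@[reducible]
noncomputable def gradedLieAlgebra (hD : IsRootDecomposition Φ h g ev) :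
    GradedLieAlgebra (rootGrading Φ h g) where
  bracket_mem _ _ _ _ := hD.lie_mem_rootGrading
  toDecomposition := (DirectSum.isInternal_submodule_of_iSupIndep_of_iSup_eq_top
    hD.iSupIndep_rootGrading hD.iSup_rootGrading).chooseDecomposition

theorem mem_of_lie_mem [IsDomain R] [Module.IsTorsionFree R L]
    (hD : IsRootDecomposition Φ h g ev) {D : L} {c : E → R} (hc : ∀ β ∈ Φ, c β ≠ 0)
    (hzero : ∀ x ∈ h, ⁅D, x⁆ = 0) (hsmul : ∀ β ∈ Φ, ∀ x ∈ g β, ⁅D, x⁆ = c β • x) {x : L}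
    (hx : ⁅D, x⁆ ∈ h) : x ∈ h := by
  have hx_top : x ∈ h ⊔ ⨆ β ∈ Φ, g β := hD.sup_eq_top ▸ Submodule.mem_top
  obtain ⟨y, hy, z, hz, rfl⟩ := Submodule.mem_sup.1 hx_top
  rw [lie_add, hzero y hy, zero_add] at hx
  have hDz : ⁅D, z⁆ = 0 := Submodule.disjoint_def.1 hD.disjoint_iSup _ hx
    (lie_mem_iSup_of_lie_eq_smul (S := {β | β ∈ Φ}) hsmul hz)
  have hz₀ : z = 0 := eq_zero_of_mem_iSup_of_lie_eq_zero (S := {β | β ∈ Φ}) hc hsmul hz hDz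
  rwa [hz₀, add_zero]

/-- The subspace `h` of a root decomposition as a Lie subalgebra. -/
def cartan (hD : IsRootDecomposition Φ h g ev) : LieSubalgebra R L where
  toSubmodule := h
  lie_mem' {x y} hx hy := by
    rw [hD.lie_eq_zero x hx y hy]
    exact h.zero_mem

instance isLieAbelian_cartan (hD : IsRootDecomposition Φ h g ev) : IsLieAbelian hD.cartan :=
  ⟨fun x y ↦ Subtype.ext (hD.lie_eq_zero x x.2 y y.2)⟩

theorem le_genWeightSpace_zero (hD : IsRootDecomposition Φ h g ev) :
    h ≤ (LieModule.genWeightSpace L (0 : hD.cartan → R)).toSubmodule := fun x hx ↦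
  LieModule.weightSpace_le_genWeightSpace L _ <| (LieModule.mem_weightSpace _ _).2 fun y ↦ by
    simpa using hD.lie_eq_zero y y.2 x hx

theorem le_genWeightSpace (hD : IsRootDecomposition Φ h g ev) {γ : E} (hγ : γ ∈ Φ) :
    g γ ≤ (LieModule.genWeightSpace L fun y : hD.cartan ↦ ev γ y).toSubmodule := fun x hx ↦
  LieModule.weightSpace_le_genWeightSpace L _ <| (LieModule.mem_weightSpace _ _).2 fun y ↦
    hD.lie_eq_smul γ hγ y y.2 x hx

/-- The root `γ`, which is a vector of `E`, as a weight of `L` with respect to `hD.cartan`: the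
restriction of `ev γ` to `h`. -/
noncomputable def weight (hD : IsRootDecomposition Φ h g ev) {γ : E} (hγ : γ ∈ Φ) :
    LieModule.Weight R hD.cartan L where
  toFun y := ev γ y
  genWeightSpace_ne_bot' hbot :=
    hD.ne_bot γ hγ <| le_bot_iff.1 <| by simpa [hbot] using hD.le_genWeightSpace hγ

@[simp]
theorem weight_apply (hD : IsRootDecomposition Φ h g ev) {γ : E} (hγ : γ ∈ Φ) (y : hD.cartan) :
    hD.weight hγ y = ev γ y := rfl

theorem iSup_genWeightSpace_eq_top (hD : IsRootDecomposition Φ h g ev) :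
    ⨆ χ ∈ insert 0 ((fun γ (y : hD.cartan) ↦ ev γ y) '' Φ), LieModule.genWeightSpace L χ = ⊤ := by
  rw [← LieSubmodule.toSubmodule_inj, LieSubmodule.top_toSubmodule, eq_top_iff, ← hD.sup_eq_top]
  simp only [LieSubmodule.iSup_toSubmodule]
  refine sup_le (le_iSup₂_of_le 0 (Set.mem_insert _ _) hD.le_genWeightSpace_zero)
    (iSup₂_le fun γ hγ ↦ le_iSup₂_of_le _ (Set.mem_insert_of_mem _ ⟨γ, hγ, rfl⟩)
      (hD.le_genWeightSpace hγ))

theorem exists_weight_eq [IsDomain R] [Module.IsTorsionFree R L]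
    (hD : IsRootDecomposition Φ h g ev) {χ : LieModule.Weight R hD.cartan L} (hχ : χ.IsNonZero) :
    ∃ γ, ∃ hγ : γ ∈ Φ, hD.weight hγ = χ := by
  rcases (LieModule.iSupIndep_genWeightSpace R hD.cartan L).mem_of_biSup_eq_top
    hD.iSup_genWeightSpace_eq_top χ.genWeightSpace_ne_bot with hzero | ⟨γ, hγ, hχγ⟩
  · exact absurd hzero hχ
  · exact ⟨γ, hγ, DFunLike.ext _ _ (congrFun hχγ)⟩

end IsRootDecomposition

end RootDecomposition

theorem IsRootDecomposition.exists_forall_lie_eq_smul {E K L : Type*} [AddCommGroup E] [Field K]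
    [LieRing L] [LieAlgebra K L] [FiniteDimensional K L] [LieAlgebra.IsKilling K L] {Φ : Finset E}
    {h : Submodule K L} {g : E → Submodule K L} {ev : E → L → K} (hD : IsRootDecomposition Φ h g ev)
    (φ : E →+ K) :
    ∃ D : L, (∀ x ∈ h, ⁅D, x⁆ = 0) ∧ ∀ β ∈ Φ, ∀ x ∈ g β, ⁅D, x⁆ = φ β • x := by
  let _ := hD.gradedLieAlgebra
  obtain ⟨D, hDer⟩ := LieDerivation.IsKilling.exists_eq_ad
    (LieDerivation.ofGrading (rootGrading Φ h g) φ)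
  have hsmul {e : E} {x : L} (hx : x ∈ rootGrading Φ h g e) : ⁅D, x⁆ = φ e • x := by
    simpa [← hDer] using LieDerivation.ofGrading_apply_apply (rootGrading Φ h g) φ hx
  refine ⟨D, fun x hx ↦ ?_, fun β hβ x hx ↦ hsmul (by rwa [hD.rootGrading_eq hβ])⟩
  rw [hsmul (e := 0) (by rwa [rootGrading_zero]), map_zero, zero_smul]

section ComplexRootDecomposition

variable {E L : Type*} [AddCommGroup E] [Module ℝ E] [LieRing L] [LieAlgebra ℂ L]
  [FiniteDimensional ℂ L] [LieAlgebra.IsKilling ℂ L]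
  {Φ : Finset E} {h : Submodule ℂ L} {g : E → Submodule ℂ L} {ev : E → L → ℂ}

namespace IsRootDecomposition

theorem exists_regular (hD : IsRootDecomposition Φ h g ev) :
    ∃ D ∈ h, ∃ ρ : Module.Dual ℝ E, (∀ β ∈ Φ, ρ β ≠ 0) ∧
      ∀ β ∈ Φ, ∀ x ∈ g β, ⁅D, x⁆ = (ρ β : ℂ) • x := by
  obtain ⟨ρ, hρ⟩ := Module.exists_dual_forall_apply_ne_zero (K := ℝ) (fun β : Φ ↦ (β : E))
    fun β ↦ hD.ne_zero β.2
  obtain ⟨D, hzero, hsmul⟩ :=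
    hD.exists_forall_lie_eq_smul (Complex.ofRealHom.toAddMonoidHom.comp ρ.toAddMonoidHom)
  refine ⟨D, ?_, ρ, fun β hβ ↦ hρ ⟨β, hβ⟩, hsmul⟩
  refine hD.mem_of_lie_mem (c := fun β ↦ (ρ β : ℂ)) (fun β hβ ↦ ?_) hzero hsmul ?_
  · exact Complex.ofReal_ne_zero.2 (hρ ⟨β, hβ⟩)
  · rw [lie_self]
    exact h.zero_mem

theorem mem_of_forall_lie_mem (hD : IsRootDecomposition Φ h g ev) {x : L}
    (hx : ∀ y ∈ h, ⁅x, y⁆ ∈ h) : x ∈ h := by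
  obtain ⟨D, hDh, ρ, hρ, hsmul⟩ := hD.exists_regular
  refine hD.mem_of_lie_mem (fun β hβ ↦ Complex.ofReal_ne_zero.2 (hρ β hβ))
    (hD.lie_eq_zero D hDh) hsmul ?_
  rw [← lie_skew]
  exact neg_mem (hx D hDh)

instance isCartanSubalgebra_cartan (hD : IsRootDecomposition Φ h g ev) :
    hD.cartan.IsCartanSubalgebra where
  nilpotent := inferInstance
  self_normalizing := le_antisymm
    (fun _ hx ↦ hD.mem_of_forall_lie_mem ((LieSubalgebra.mem_normalizer_iff _ _).1 hx))
    hD.cartan.le_normalizer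

theorem exists_forall_ev_eq (hD : IsRootDecomposition Φ h g ev) (f : Module.Dual ℝ E) :
    ∃ H ∈ h, ∀ γ ∈ Φ, ev γ H = f γ := by
  obtain ⟨H, hzero, hsmul⟩ :=
    hD.exists_forall_lie_eq_smul (Complex.ofRealHom.toAddMonoidHom.comp f.toAddMonoidHom)
  have hH : H ∈ h := hD.mem_of_forall_lie_mem fun y hy ↦ by
    rw [hzero y hy]
    exact h.zero_mem
  refine ⟨H, hH, fun γ hγ ↦ ?_⟩
  obtain ⟨x, hx, hx₀⟩ := Submodule.exists_mem_ne_zero_of_ne_bot (hD.ne_bot γ hγ)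
  exact smul_left_injective ℂ hx₀ ((hD.lie_eq_smul γ hγ H hH x hx).symm.trans (hsmul γ hγ x hx))

theorem isNonZero_weight (hD : IsRootDecomposition Φ h g ev) {γ : E} (hγ : γ ∈ Φ) :
    (hD.weight hγ).IsNonZero := by
  intro hzero
  refine hD.ne_zero hγ ((Module.forall_dual_apply_eq_zero_iff ℝ γ).1 fun f ↦ ?_)
  obtain ⟨H, hH, hev⟩ := hD.exists_forall_ev_eq f
  have hγH : ev γ H = 0 := congrFun hzero ⟨H, hH⟩
  exact_mod_cast (hev γ hγ).symm.trans hγH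

theorem eq_sub_smul_of_forall_ev_eq (hD : IsRootDecomposition Φ h g ev) {α γ δ : E} (hα : α ∈ Φ)
    (hγ : γ ∈ Φ) (hδ : δ ∈ Φ) {c : ℝ} (hev : ∀ x ∈ h, ev δ x = ev γ x - c * ev α x) :
    δ = γ - c • α := by
  rw [← sub_eq_zero, ← Module.forall_dual_apply_eq_zero_iff ℝ]
  intro f
  obtain ⟨H, hH, hf⟩ := hD.exists_forall_ev_eq f
  have hfδ := hev H hH
  rw [hf δ hδ, hf γ hγ, hf α hα] at hfδ
  have hfδ' : f δ = f γ - c * f α := by exact_mod_cast hfδ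
  rw [map_sub, map_sub, map_smul, smul_eq_mul, hfδ', sub_self]

theorem sub_smul_mem (hD : IsRootDecomposition Φ h g ev) {α γ : E} (hα : α ∈ Φ) (hγ : γ ∈ Φ)
    {m : ℤ} (hm : hD.weight hγ (LieAlgebra.IsKilling.coroot (hD.weight hα)) = m) :
    γ - (m : ℝ) • α ∈ Φ := by
  obtain ⟨δ, hδ, hδ_eq⟩ := hD.exists_weight_eq
    (LieAlgebra.IsKilling.reflectRoot_isNonZero (hD.weight hα) _ (hD.isNonZero_weight hγ))
  have hev : ∀ x ∈ h, ev δ x = ev γ x - (m : ℝ) * ev α x := fun x hx ↦ by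
    simpa [LieAlgebra.IsKilling.reflectRoot, hm] using
      congrArg (fun χ : LieModule.Weight ℂ hD.cartan L ↦ χ ⟨x, hx⟩) hδ_eq
  exact hD.eq_sub_smul_of_forall_ev_eq hα hγ hδ hev ▸ hδ

theorem killingForm_eq_zero (hD : IsRootDecomposition Φ h g ev) {β γ : E} (hβ : β ∈ Φ) (hγ : γ ∈ Φ)
    (hβγ : β + γ ≠ 0) {x y : L} (hx : x ∈ g β) (hy : y ∈ g γ) : killingForm ℂ L x y = 0 := by
  obtain ⟨f, hf⟩ : ∃ f : Module.Dual ℝ E, f (β + γ) ≠ 0 := by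
    simpa using (Module.forall_dual_apply_eq_zero_iff ℝ (β + γ)).not.2 hβγ
  obtain ⟨H, hH, hev⟩ := hD.exists_forall_ev_eq f
  refine killingForm_eq_zero_of_lie_eq_smul (hD.lie_eq_smul β hβ H hH x hx)
    (hD.lie_eq_smul γ hγ H hH y hy) ?_
  rw [hev β hβ, hev γ hγ, ← Complex.ofReal_add, ← map_add]
  exact Complex.ofReal_ne_zero.2 hf

theorem killingForm_eq_zero_of_mem (hD : IsRootDecomposition Φ h g ev) {β : E} (hβ : β ∈ Φ)
    {x y : L} (hx : x ∈ g β) (hy : y ∈ h) : killingForm ℂ L x y = 0 := by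
  obtain ⟨D, hDh, ρ, hρ, hsmul⟩ := hD.exists_regular
  refine killingForm_eq_zero_of_lie_eq_smul (hsmul β hβ x hx)
    (by rw [hD.lie_eq_zero D hDh y hy, zero_smul] : ⁅D, y⁆ = (0 : ℂ) • y) ?_
  simpa using hρ β hβ

theorem eq_zero_of_forall_killingForm_eq_zero (hD : IsRootDecomposition Φ h g ev) {S : Set E}
    (hS : S ⊆ Φ) {Z : L} (hZ : Z ∈ ⨆ β ∈ S, g β)
    (hZX : ∀ β ∈ Φ, -β ∈ S → ∀ X ∈ g β, killingForm ℂ L Z X = 0) : Z = 0 := by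
  have hzero {y : L} (hy : ∀ β ∈ S, ∀ x ∈ g β, killingForm ℂ L y x = 0) :
      killingForm ℂ L Z y = 0 := by
    have hle : ⨆ β ∈ S, g β ≤ LinearMap.ker (killingForm ℂ L y) := iSup₂_le hy
    rw [LieModule.traceForm_comm]
    exact hle hZ
  have htop : h ⊔ ⨆ β ∈ Φ, g β ≤ LinearMap.ker (killingForm ℂ L Z) := by
    refine sup_le (fun y hy ↦ hzero fun β hβ x hx ↦ ?_) (iSup₂_le fun γ hγ y hy ↦ ?_)
    · rw [LieModule.traceForm_comm]
      exact hD.killingForm_eq_zero_of_mem (hS hβ) hx hy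
    · by_cases hγS : -γ ∈ S
      · exact hZX γ hγ hγS y hy
      · refine hzero fun β hβ x hx ↦ hD.killingForm_eq_zero hγ (hS hβ) (fun hγβ ↦ hγS ?_) hy hx
        rwa [← eq_neg_of_add_eq_zero_right hγβ]
  rw [hD.sup_eq_top] at htop
  exact (LieAlgebra.IsKilling.killingForm_nondegenerate ℂ L).1 Z fun y ↦ htop Submodule.mem_top

theorem eq_zero_of_forall_killingForm_lie_eq_zero (hD : IsRootDecomposition Φ h g ev) {S : Set E}
    (hS : S ⊆ Φ) {H : L} (hH : H ∈ h) (hev : ∀ β ∈ S, ev β H ≠ 0) {Z : L}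
    (hZ : Z ∈ ⨆ β ∈ S, g β)
    (hZX : ∀ β ∈ Φ, -β ∈ S → ∀ X ∈ g β, killingForm ℂ L H ⁅Z, X⁆ = 0) : Z = 0 := by
  have hsmul : ∀ β ∈ S, ∀ x ∈ g β, ⁅H, x⁆ = ev β H • x := fun β hβ ↦
    hD.lie_eq_smul β (hS hβ) H hH
  refine eq_zero_of_mem_iSup_of_lie_eq_zero hev hsmul hZ ?_
  refine hD.eq_zero_of_forall_killingForm_eq_zero hS (lie_mem_iSup_of_lie_eq_smul hsmul hZ)
    fun β hβ hβS X hX ↦ ?_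
  rw [← hZX β hβ hβS X hX]
  exact LieModule.traceForm_apply_lie_apply ℂ L L H Z X

end IsRootDecomposition

end ComplexRootDecomposition

section Euclidean

variable {E : Type*} [NormedAddCommGroup E] [InnerProductSpace ℝ E]

/-- The functional `β ↦ ⟨β, α^∨⟩ = 2⟪β, α⟫ / ⟪α, α⟫` of the Euclidean space `E`; it is zero when
`α = 0`. -/
noncomputable def corootFunctional (α : E) : Module.Dual ℝ E := (2 / ⟪α, α⟫) • innerₗ E α

theorem corootFunctional_apply (α β : E) : corootFunctional α β = 2 * ⟪β, α⟫ / ⟪α, α⟫ := by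
  simp only [corootFunctional, LinearMap.smul_apply, innerₗ_apply_apply, smul_eq_mul,
    real_inner_comm]
  ring

theorem corootFunctional_self {α : E} (hα : α ≠ 0) : corootFunctional α α = 2 := by
  rw [corootFunctional_apply, mul_div_assoc, div_self (inner_self_ne_zero.2 hα), mul_one]

theorem inner_sub_self_le_mul_two_sub_corootFunctional {α γ : E} (hα : α ≠ 0)
    (hγ : ⟪γ, γ⟫ ≤ ⟪α, α⟫) : ⟪γ - α, γ - α⟫ ≤ ⟪α, α⟫ * (2 - corootFunctional α γ) := by
  have hmul : ⟪α, α⟫ * corootFunctional α γ = 2 * ⟪γ, α⟫ := by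
    rw [corootFunctional_apply, mul_div_cancel₀ _ (inner_self_ne_zero.2 hα)]
  rw [real_inner_sub_sub_self]
  linarith

theorem corootFunctional_le_two {α γ : E} (hα : α ≠ 0) (hγ : ⟪γ, γ⟫ ≤ ⟪α, α⟫) :
    corootFunctional α γ ≤ 2 := by
  have hnonneg := real_inner_self_nonneg.trans
    (inner_sub_self_le_mul_two_sub_corootFunctional hα hγ)
  exact sub_nonneg.1 (nonneg_of_mul_nonneg_right hnonneg (real_inner_self_pos.2 hα))

theorem eq_of_corootFunctional_eq_two {α γ : E} (hα : α ≠ 0) (hγ : ⟪γ, γ⟫ ≤ ⟪α, α⟫)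
    (hc : corootFunctional α γ = 2) : γ = α := by
  have hle := inner_sub_self_le_mul_two_sub_corootFunctional hα hγ
  rw [hc, sub_self, mul_zero] at hle
  exact sub_eq_zero.1 (inner_self_eq_zero.1 (hle.antisymm real_inner_self_nonneg))

theorem neg_two_le_corootFunctional {α γ : E} (hα : α ≠ 0) (hγ : ⟪γ, γ⟫ ≤ ⟪α, α⟫) :
    -2 ≤ corootFunctional α γ := by
  rw [neg_le, ← map_neg]
  exact corootFunctional_le_two hα (by rwa [inner_neg_neg])

theorem eq_neg_of_corootFunctional_eq_neg_two {α γ : E} (hα : α ≠ 0) (hγ : ⟪γ, γ⟫ ≤ ⟪α, α⟫)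
    (hc : corootFunctional α γ = -2) : γ = -α := by
  rw [← neg_eq_iff_eq_neg]
  exact eq_of_corootFunctional_eq_two hα (by rwa [inner_neg_neg]) (by rw [map_neg, hc, neg_neg])

theorem corootFunctional_eq_of_inner_self_sub_smul_le {α γ : E} {m : ℤ} (hα : α ≠ 0) (hγ : γ ≠ 0)
    (hγm : γ - (m : ℝ) • α ≠ 0) (hγ_le : ⟪γ, γ⟫ ≤ ⟪α, α⟫)
    (hγm_le : ⟪γ - (m : ℝ) • α, γ - (m : ℝ) • α⟫ ≤ ⟪α, α⟫)
    (hint : ∃ k : ℤ, corootFunctional α γ = k) (hm : m ≠ 0) : corootFunctional α γ = m := by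
  obtain ⟨k, hk⟩ := hint
  have hkm : corootFunctional α (γ - (m : ℝ) • α) = (k - 2 * m : ℤ) := by
    rw [map_sub, map_smul, corootFunctional_self hα, hk, smul_eq_mul]
    push_cast
    ring
  have hk_le : k ≤ 2 := by exact_mod_cast hk ▸ corootFunctional_le_two hα hγ_le
  have hk_ge : -2 ≤ k := by exact_mod_cast hk ▸ neg_two_le_corootFunctional hα hγ_le
  have hkm_le : k - 2 * m ≤ 2 := by exact_mod_cast hkm ▸ corootFunctional_le_two hα hγm_le
  have hkm_ge : -2 ≤ k - 2 * m := by
    exact_mod_cast hkm ▸ neg_two_le_corootFunctional hα hγm_le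
  have h_two_one : ¬(k = 2 ∧ m = 1) := by
    rintro ⟨rfl, rfl⟩
    apply hγm
    rw [eq_of_corootFunctional_eq_two hα hγ_le (mod_cast hk), Int.cast_one, one_smul, sub_self]
  have h_neg_two_neg_one : ¬(k = -2 ∧ m = -1) := by
    rintro ⟨rfl, rfl⟩
    apply hγm
    rw [eq_neg_of_corootFunctional_eq_neg_two hα hγ_le (mod_cast hk)]
    simp
  have h_zero_one : ¬(k = 0 ∧ m = 1) := by
    rintro ⟨rfl, rfl⟩
    apply hγ
    simpa using eq_neg_of_corootFunctional_eq_neg_two hα hγm_le (mod_cast hkm)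
  have h_zero_neg_one : ¬(k = 0 ∧ m = -1) := by
    rintro ⟨rfl, rfl⟩
    apply hγ
    simpa using eq_of_corootFunctional_eq_two hα hγm_le (mod_cast hkm)
  rw [hk, show k = m by omega]

/-- `α` is a root of maximal length in `Φ`, and its pairings `⟨γ, α^∨⟩` with the roots are
integers. -/
structure IsLongRoot (Φ : Finset E) (α : E) : Prop where
  mem : α ∈ Φ
  inner_self_le : ∀ γ ∈ Φ, ⟪γ, γ⟫ ≤ ⟪α, α⟫
  exists_int : ∀ γ ∈ Φ, ∃ k : ℤ, corootFunctional α γ = k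

section LongRoot

variable {L : Type*} [LieRing L] [LieAlgebra ℂ L] [FiniteDimensional ℂ L]
  {Φ : Finset E} {h : Submodule ℂ L} {g : E → Submodule ℂ L} {ev : E → L → ℂ} {α γ : E}

namespace IsRootDecomposition

open LieAlgebra.IsKilling

theorem weight_apply_coroot_of_ne_zero [LieAlgebra.IsKilling ℂ L]
    (hD : IsRootDecomposition Φ h g ev) (hα : IsLongRoot Φ α) (hγ : γ ∈ Φ)
    (hne : hD.weight hγ (coroot (hD.weight hα.mem)) ≠ 0) :
    hD.weight hγ (coroot (hD.weight hα.mem)) = corootFunctional α γ := by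
  obtain ⟨m, hm⟩ : ∃ m : ℤ, hD.weight hγ (coroot (hD.weight hα.mem)) = m :=
    ⟨_, apply_coroot_eq_cast (hD.weight hα.mem) (hD.weight hγ)⟩
  have hmem : γ - (m : ℝ) • α ∈ Φ := hD.sub_smul_mem hα.mem hγ hm
  rw [corootFunctional_eq_of_inner_self_sub_smul_le (hD.ne_zero hα.mem) (hD.ne_zero hγ)
    (hD.ne_zero hmem) (hα.inner_self_le γ hγ) (hα.inner_self_le _ hmem) (hα.exists_int γ hγ)
    fun hm₀ ↦ hne (by rw [hm, hm₀, Int.cast_zero]), hm, Complex.ofReal_intCast]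

theorem cartanEquivDual_symm_weight [LieAlgebra.IsKilling ℂ L]
    (hD : IsRootDecomposition Φ h g ev) (hα : α ∈ Φ) {Hα : L} (hHα : Hα ∈ h)
    (hκ : ∀ x ∈ h, ev α x = killingForm ℂ L Hα x) :
    (cartanEquivDual hD.cartan).symm (hD.weight hα).toLinear = ⟨Hα, hHα⟩ := by
  rw [LinearEquiv.symm_apply_eq]
  ext y
  rw [cartanEquivDual_apply_apply, LieModule.Weight.toLinear_apply, weight_apply, hκ y y.2]
  rfl

variable [LieAlgebra.IsSimple ℂ L]

theorem weight_apply_coroot (hD : IsRootDecomposition Φ h g ev) (hα : IsLongRoot Φ α)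
    (hγ : γ ∈ Φ) : hD.weight hγ (coroot (hD.weight hα.mem)) = corootFunctional α γ := by
  obtain ⟨K, hK⟩ : ∃ K : hD.cartan, ∀ γ ∈ Φ, ev γ K = corootFunctional α γ :=
    have ⟨K, hKh, hK⟩ := hD.exists_forall_ev_eq (corootFunctional α)
    ⟨⟨K, hKh⟩, hK⟩
  set c := coroot (hD.weight hα.mem) with hc
  have hroot (i : hD.cartan.root) :
      Module.Dual.eval ℂ hD.cartan c ((rootSystem hD.cartan).root i) = 0 ∨
      Module.Dual.eval ℂ hD.cartan (K - c) ((rootSystem hD.cartan).root i) = 0 := by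
    obtain ⟨δ, hδ, hδi⟩ := hD.exists_weight_eq (LieSubalgebra.isNonZero_coe_root i)
    rw [rootSystem_root_apply, ← hδi, or_iff_not_imp_left]
    intro hne
    simp only [Module.Dual.eval_apply, LieModule.Weight.toLinear_apply] at hne
    rw [Module.Dual.eval_apply, map_sub, LieModule.Weight.toLinear_apply,
      LieModule.Weight.toLinear_apply]
    rw [hD.weight_apply_coroot_of_ne_zero hα hδ hne, weight_apply, hK δ hδ, sub_self]
  rcases eq_zero_or_eq_zero_of_forall_root _ hroot with hzero | hzero
  · have hαc : hD.weight hα.mem c = 0 := by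
      simpa using LinearMap.congr_fun hzero (hD.weight hα.mem).toLinear
    rw [hc, root_apply_coroot (hD.isNonZero_weight hα.mem)] at hαc
    exact absurd hαc two_ne_zero
  · have hγc : hD.weight hγ K - hD.weight hγ c = 0 := by
      simpa using LinearMap.congr_fun hzero (hD.weight hγ).toLinear
    rw [← sub_eq_zero.1 hγc, weight_apply, hK γ hγ]

theorem sub_corootFunctional_smul_mem (hD : IsRootDecomposition Φ h g ev) (hα : IsLongRoot Φ α)
    (hγ : γ ∈ Φ) : γ - corootFunctional α γ • α ∈ Φ := by
  obtain ⟨k, hk⟩ := hα.exists_int γ hγ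
  rw [hk]
  exact hD.sub_smul_mem hα.mem hγ (by rw [hD.weight_apply_coroot hα hγ, hk]; simp)

theorem ev_ne_zero_of_corootFunctional_ne_zero (hD : IsRootDecomposition Φ h g ev)
    (hα : IsLongRoot Φ α) {Hα : L} (hHα : Hα ∈ h) (hκ : ∀ x ∈ h, ev α x = killingForm ℂ L Hα x)
    (hγ : γ ∈ Φ) (hne : corootFunctional α γ ≠ 0) : ev γ Hα ≠ 0 := by
  intro hzero
  have hcoroot := hD.weight_apply_coroot hα hγ
  rw [coroot, hD.cartanEquivDual_symm_weight hα.mem hHα hκ, ← LieModule.Weight.toLinear_apply,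
    map_nsmul, map_smul, LieModule.Weight.toLinear_apply, hD.weight_apply hγ, hzero, smul_zero,
    smul_zero] at hcoroot
  exact hne (by exact_mod_cast hcoroot.symm)

end IsRootDecomposition

end LongRoot

/-- `Δ` is a base of `Φ`, and `n β γ` is the coefficient `n_γ(β)` of `γ ∈ Δ` in the root `β`; the
values of `n` elsewhere are unconstrained. -/
structure IsRootBase (Φ Δ : Finset E) (n : E → E → ℤ) : Prop where
  subset : (Δ : Set E) ⊆ Φ
  linearIndependent : LinearIndependent ℝ fun γ : Δ ↦ (γ : E)
  eq_sum : ∀ β ∈ Φ, β = ∑ γ ∈ Δ, (n β γ : ℝ) • γ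
  nonneg_or_nonpos : ∀ β ∈ Φ, (∀ γ ∈ Δ, 0 ≤ n β γ) ∨ ∀ γ ∈ Δ, n β γ ≤ 0

/-- The set `N(α)` of neighbors of `α` in the Dynkin diagram of the base `Δ`. -/
noncomputable def dynkinNeighbors (Δ : Finset E) (α : E) : Finset E :=
  Δ.filter fun γ ↦ γ ≠ α ∧ ⟪γ, α⟫ ≠ 0

/-- The height `ht_Σ(β) = ∑ γ ∈ Σ, n_γ(β)` with respect to `Σ = {α} ∪ N(α)`. -/
noncomputable def neighborHeight (Δ : Finset E) (n : E → E → ℤ) (α β : E) : ℤ :=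
  ∑ γ ∈ insert α (dynkinNeighbors Δ α), n β γ

namespace IsRootBase

variable {Φ Δ : Finset E} {n : E → E → ℤ} {α β γ : E}

theorem ne_zero (hB : IsRootBase Φ Δ n) (hα : α ∈ Δ) : α ≠ 0 :=
  hB.linearIndependent.ne_zero ⟨α, hα⟩

theorem coeff_eq (hB : IsRootBase Φ Δ n) {c : E → ℝ} (hβ : β ∈ Φ) (hc : β = ∑ δ ∈ Δ, c δ • δ)
    (hγ : γ ∈ Δ) : n β γ = c γ :=
  linearIndepOn_finset_iffₛ.1 (show LinearIndepOn ℝ id (Δ : Set E) from hB.linearIndependent) _ _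
    ((hB.eq_sum β hβ).symm.trans hc) γ hγ

theorem coeff_neg (hB : IsRootBase Φ Δ n) (hβ : β ∈ Φ) (hβ' : -β ∈ Φ) (hγ : γ ∈ Δ) :
    n (-β) γ = -n β γ := by
  have hsum : -β = ∑ δ ∈ Δ, (-n β δ : ℝ) • δ := by
    simp only [neg_smul, Finset.sum_neg_distrib]
    rw [← hB.eq_sum β hβ]
  exact_mod_cast hB.coeff_eq hβ' hsum hγ

theorem coeff_eq_of_eq_add (hB : IsRootBase Φ Δ n) {s t : ℝ} (hβ : β ∈ Φ) (hγ : γ ∈ Δ)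
    (hα : α ∈ Δ) (hγα : γ ≠ α) (hst : β = s • γ + t • α) : n β γ = s ∧ n β α = t := by
  have hsum : β = ∑ δ ∈ Δ, (Pi.single γ s + Pi.single α t : E → ℝ) δ • δ := by
    simp [hst, add_smul, Finset.sum_add_distrib, Pi.single_apply, ite_smul, hγ, hα]
  have hcoeff {δ : E} (hδ : δ ∈ Δ) := hB.coeff_eq hβ hsum hδ
  exact ⟨by simpa [hγα] using hcoeff hγ, by simpa [hγα.symm] using hcoeff hα⟩

theorem ne_neg (hB : IsRootBase Φ Δ n) (hγ : γ ∈ Δ) (hα : α ∈ Δ) (hγα : γ ≠ α) : γ ≠ -α := by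
  intro heq
  have hone : (n γ γ : ℝ) = 1 :=
    (hB.coeff_eq_of_eq_add (s := 1) (t := 0) (hB.subset hγ) hγ hα hγα (by simp)).1
  have hzero : (n γ γ : ℝ) = 0 :=
    (hB.coeff_eq_of_eq_add (s := 0) (t := -1) (hB.subset hγ) hγ hα hγα (by simpa using heq)).1
  exact one_ne_zero (hone.symm.trans hzero)

theorem corootFunctional_nonpos (hB : IsRootBase Φ Δ n) (hα : α ∈ Δ) (hγ : γ ∈ Δ) (hγα : γ ≠ α)
    (hrefl : γ - corootFunctional α γ • α ∈ Φ) : corootFunctional α γ ≤ 0 := by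
  obtain ⟨hcoeff_γ, hcoeff_α⟩ := hB.coeff_eq_of_eq_add (s := 1) (t := -corootFunctional α γ) hrefl
    hγ hα hγα (by rw [one_smul, neg_smul, sub_eq_add_neg])
  rcases hB.nonneg_or_nonpos _ hrefl with hnonneg | hnonpos
  · rw [← neg_nonneg, ← hcoeff_α]
    exact_mod_cast hnonneg α hα
  · have hle : (n (γ - corootFunctional α γ • α) γ : ℝ) ≤ 0 := by exact_mod_cast hnonpos γ hγ
    linarith

theorem corootFunctional_eq_neg_one (hB : IsRootBase Φ Δ n) (hlong : IsLongRoot Φ α)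
    (hα : α ∈ Δ) (hγ : γ ∈ dynkinNeighbors Δ α)
    (hrefl : γ - corootFunctional α γ • α ∈ Φ) : corootFunctional α γ = -1 := by
  have hα₀ := hB.ne_zero hα
  obtain ⟨hγΔ, hγα, hinner⟩ := Finset.mem_filter.1 hγ
  obtain ⟨k, hk⟩ := hlong.exists_int γ (hB.subset hγΔ)
  have hγ_le := hlong.inner_self_le γ (hB.subset hγΔ)
  have hk_le : k ≤ 0 := by
    exact_mod_cast hk ▸ hB.corootFunctional_nonpos hα hγΔ hγα hrefl
  have hk_ge : -2 ≤ k := by exact_mod_cast hk ▸ neg_two_le_corootFunctional hα₀ hγ_le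
  have hk_ne_zero : k ≠ 0 := by
    rintro rfl
    rw [corootFunctional_apply, Int.cast_zero, div_eq_zero_iff] at hk
    simp [hinner, hα₀] at hk
  have hk_ne_neg_two : k ≠ -2 := by
    rintro rfl
    exact hB.ne_neg hγΔ hα hγα (eq_neg_of_corootFunctional_eq_neg_two hα₀ hγ_le (mod_cast hk))
  rw [hk, show k = -1 by omega, Int.cast_neg, Int.cast_one]

theorem neighborHeight_eq (hB : IsRootBase Φ Δ n) (hlong : IsLongRoot Φ α) (hα : α ∈ Δ)
    (hrefl : ∀ γ ∈ Φ, γ - corootFunctional α γ • α ∈ Φ) (hβ : β ∈ Φ) :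
    (neighborHeight Δ n α β : ℝ) = 3 * n β α - corootFunctional α β := by
  have hα_notMem : α ∉ dynkinNeighbors Δ α := by simp [dynkinNeighbors]
  have hsubset : insert α (dynkinNeighbors Δ α) ⊆ Δ :=
    Finset.insert_subset hα (Finset.filter_subset _ _)
  have hzero : ∀ γ ∈ Δ, γ ∉ insert α (dynkinNeighbors Δ α) → n β γ * corootFunctional α γ = 0 := by
    intro γ hγΔ hγ
    have hinner : ⟪γ, α⟫ = 0 := by
      simp only [dynkinNeighbors, Finset.mem_insert, Finset.mem_filter] at hγ
      tauto
    rw [corootFunctional_apply, hinner, mul_zero, zero_div, mul_zero]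
  have hneg : ∀ γ ∈ dynkinNeighbors Δ α, n β γ * corootFunctional α γ = -n β γ := fun γ hγ ↦ by
    rw [hB.corootFunctional_eq_neg_one hlong hα hγ
      (hrefl γ (hB.subset (Finset.mem_filter.1 hγ).1)), mul_neg_one]
  have hcoroot : corootFunctional α β = n β α * 2 - ∑ γ ∈ dynkinNeighbors Δ α, (n β γ : ℝ) :=
    calc corootFunctional α β = ∑ γ ∈ Δ, n β γ * corootFunctional α γ := by
          conv_lhs => rw [hB.eq_sum β hβ]
          simp only [map_sum, map_smul, smul_eq_mul]
      _ = ∑ γ ∈ insert α (dynkinNeighbors Δ α), n β γ * corootFunctional α γ :=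
          (Finset.sum_subset hsubset hzero).symm
      _ = n β α * 2 - ∑ γ ∈ dynkinNeighbors Δ α, (n β γ : ℝ) := by
          rw [Finset.sum_insert hα_notMem, corootFunctional_self (hB.ne_zero hα),
            Finset.sum_congr rfl hneg, Finset.sum_neg_distrib, sub_eq_add_neg]
  rw [hcoroot, neighborHeight, Finset.sum_insert hα_notMem]
  push_cast
  ring

theorem corootFunctional_ne_zero (hB : IsRootBase Φ Δ n) (hlong : IsLongRoot Φ α) (hα : α ∈ Δ)
    (hrefl : ∀ γ ∈ Φ, γ - corootFunctional α γ • α ∈ Φ) (hβ : β ∈ Φ)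
    (hheight : ¬3 ∣ neighborHeight Δ n α β) : corootFunctional α β ≠ 0 := by
  intro hzero
  have heq := hB.neighborHeight_eq hlong hα hrefl hβ
  rw [hzero, sub_zero] at heq
  exact hheight ⟨n β α, by exact_mod_cast heq⟩

theorem neighborHeight_neg (hB : IsRootBase Φ Δ n) (hα : α ∈ Δ) (hβ : β ∈ Φ) (hβ' : -β ∈ Φ) :
    neighborHeight Δ n α (-β) = -neighborHeight Δ n α β := by
  rw [neighborHeight, neighborHeight, ← Finset.sum_neg_distrib]
  refine Finset.sum_congr rfl fun γ hγ ↦ hB.coeff_neg hβ hβ' ?_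
  exact Finset.insert_subset hα (Finset.filter_subset _ _) hγ

end IsRootBase

end Euclidean

/-- The sum `q_k` of the root spaces `g β` over the roots `β ∈ Φ` of height `ht β = k`. -/
def heightSpace {E R L : Type*} [Semiring R] [AddCommMonoid L] [Module R L] (Φ : Finset E)
    (g : E → Submodule R L) (ht : E → ℤ) (k : ℤ) : Submodule R L :=
  ⨆ β ∈ {β : E | β ∈ Φ ∧ ht β = k}, g β

section NeighborHeightGrading

variable {E : Type*} [NormedAddCommGroup E] [InnerProductSpace ℝ E]
  {L : Type*} [LieRing L] [LieAlgebra ℂ L] [FiniteDimensional ℂ L] [LieAlgebra.IsSimple ℂ L]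
  {Φ Δ : Finset E} {n : E → E → ℤ} {h : Submodule ℂ L} {g : E → Submodule ℂ L} {ev : E → L → ℂ}
  {α : E} {Hα : L}

theorem eq_zero_of_mem_heightSpace (hD : IsRootDecomposition Φ h g ev) (hB : IsRootBase Φ Δ n)
    (hlong : IsLongRoot Φ α) (hα : α ∈ Δ) (hHα : Hα ∈ h)
    (hκ : ∀ x ∈ h, ev α x = killingForm ℂ L Hα x) {k : ℤ} (hk : ¬3 ∣ k) {Z : L}
    (hZ : Z ∈ heightSpace Φ g (neighborHeight Δ n α) k)
    (hZX : ∀ X ∈ heightSpace Φ g (neighborHeight Δ n α) (-k), killingForm ℂ L Hα ⁅Z, X⁆ = 0) :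
    Z = 0 := by
  refine hD.eq_zero_of_forall_killingForm_lie_eq_zero (fun β hβ ↦ hβ.1) hHα ?_ hZ ?_
  · rintro β ⟨hβ, rfl⟩
    exact hD.ev_ne_zero_of_corootFunctional_ne_zero hlong hHα hκ hβ <|
      hB.corootFunctional_ne_zero hlong hα (fun γ ↦ hD.sub_corootFunctional_smul_mem hlong) hβ hk
  · rintro β hβ ⟨hβ', rfl⟩ X hX
    refine hZX X (Submodule.mem_iSup_of_mem β (Submodule.mem_iSup_of_mem ⟨hβ, ?_⟩ hX))
    rw [hB.neighborHeight_neg hα hβ hβ', neg_neg]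

theorem killing_pairing_nondegenerate_general (hD : IsRootDecomposition Φ h g ev)
    (hB : IsRootBase Φ Δ n) (hlong : IsLongRoot Φ α) (hα : α ∈ Δ) (hHα : Hα ∈ h)
    (hκ : ∀ x ∈ h, ev α x = killingForm ℂ L Hα x) {k : ℤ} (hk : ¬3 ∣ k) :
    (∀ Z ∈ heightSpace Φ g (neighborHeight Δ n α) k,
      (∀ X ∈ heightSpace Φ g (neighborHeight Δ n α) (-k), killingForm ℂ L Hα ⁅Z, X⁆ = 0) →
        Z = 0) ∧
    ∀ X ∈ heightSpace Φ g (neighborHeight Δ n α) (-k),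
      (∀ Z ∈ heightSpace Φ g (neighborHeight Δ n α) k, killingForm ℂ L Hα ⁅Z, X⁆ = 0) →
        X = 0 := by
  refine ⟨fun Z ↦ eq_zero_of_mem_heightSpace hD hB hlong hα hHα hκ hk, fun X hX hXZ ↦
    eq_zero_of_mem_heightSpace hD hB hlong hα hHα hκ (mt Int.dvd_neg.1 hk) hX fun Z hZ ↦ ?_⟩
  rw [neg_neg] at hZ
  rw [← lie_skew, map_neg, hXZ Z hZ, neg_zero]

end NeighborHeightGrading

/-- Let `𝔤 = L` be a finite-dimensional complex simple Lie algebra with Cartan subalgebra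
`𝔥 = h`, Killing form `κ`, root system `Φ` (realized in a real inner product space `E`,
with root spaces `g β`, the roots acting on `h` via the weight functions `ev β`), base
`Δ`, and let `α ∈ Δ` be a long simple root; set `Σ_q := {α} ∪ N(α)` and for `i ≠ 0` let
`q_i := ⊕_{ht_{Σ_q}(β)=i} 𝔤_β`.  Let `H_α ∈ 𝔥` be the unique element with
`α = κ(H_α, ·)|_𝔥`.  Then for `i = 1` and `i = 2`, the bilinear map `q_i × q_{−i} → ℂ`
given by `(Z, X) ↦ κ(H_α, ⁅Z, X⁆)` is nondegenerate. -/
theorem killing_pairing_nondegenerate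
    {E : Type*} [NormedAddCommGroup E] [InnerProductSpace ℝ E]
    {L : Type*} [LieRing L] [LieAlgebra ℂ L] [FiniteDimensional ℂ L]
    [LieAlgebra.IsSimple ℂ L]
    (Φ : Finset E)
    (hΦ0 : (0 : E) ∉ Φ)
    (hspan : Submodule.span ℝ (Φ : Set E) = ⊤)
    (hrefl : ∀ α ∈ Φ, ∀ β ∈ Φ, β - (2 * ⟪β, α⟫ / ⟪α, α⟫) • α ∈ Φ)
    (hcrys : ∀ α ∈ Φ, ∀ β ∈ Φ, ∃ m : ℤ, 2 * ⟪β, α⟫ / ⟪α, α⟫ = (m : ℝ))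
    (hred : ∀ α ∈ Φ, ∀ t : ℝ, t • α ∈ Φ → t = 1 ∨ t = -1)
    (hirr : ∀ S : Set E,
      (∀ β ∈ Φ, ∀ γ ∈ Φ, β ∈ S → ⟪β, γ⟫ ≠ 0 → γ ∈ S) →
      (∃ β ∈ Φ, β ∈ S) → ∀ β ∈ Φ, β ∈ S)
    (Δ : Finset E) (hΔΦ : (Δ : Set E) ⊆ (Φ : Set E))
    (hΔli : LinearIndependent ℝ (fun γ : Δ => (γ : E)))
    (n : E → E → ℤ)
    (hn : ∀ β ∈ Φ, β = ∑ γ ∈ Δ, (n β γ : ℝ) • γ)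
    (hsign : ∀ β ∈ Φ, (∀ γ ∈ Δ, 0 ≤ n β γ) ∨ (∀ γ ∈ Δ, n β γ ≤ 0))
    -- the Cartan subalgebra and the root space decomposition, each root `β` acting on
    -- `h` by the weight function `ev β`
    (h : Submodule ℂ L) (g : E → Submodule ℂ L) (ev : E → L → ℂ)
    (habel : ∀ x ∈ h, ∀ y ∈ h, ⁅x, y⁆ = 0)
    (hgne : ∀ β ∈ Φ, g β ≠ ⊥)
    (hev : ∀ β ∈ Φ, ∀ x ∈ h, ∀ y ∈ g β, ⁅x, y⁆ = ev β x • y)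
    (hgg : ∀ β ∈ Φ, ∀ γ ∈ Φ, ∀ x ∈ g β, ∀ y ∈ g γ,
      (β + γ ∈ Φ → ⁅x, y⁆ ∈ g (β + γ)) ∧ (β + γ = 0 → ⁅x, y⁆ ∈ h) ∧
      (β + γ ∉ Φ → β + γ ≠ 0 → ⁅x, y⁆ = 0))
    (hdec : h ⊔ (⨆ β ∈ Φ, g β) = ⊤)
    (hindh : Disjoint h (⨆ β ∈ Φ, g β))
    (hindg : ∀ β ∈ Φ, Disjoint (g β) (h ⊔ ⨆ γ ∈ Φ.erase β, g γ))
    -- the long simple root `α`, its Dynkin neighbors, `Σ_q` and the height `ht_{Σ_q}`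
    (α : E) (hαΔ : α ∈ Δ)
    (hlong : ∀ γ ∈ Φ, ⟪γ, γ⟫ ≤ ⟪α, α⟫)
    (Nbr : Finset E) (hNbr : Nbr = Δ.filter fun γ => γ ≠ α ∧ ⟪γ, α⟫ ≠ 0)
    (Sq : Finset E) (hSq : Sq = insert α Nbr)
    (htq : E → ℤ) (hhtq : ∀ β, htq β = ∑ γ ∈ Sq, n β γ)
    -- the grading components `q_{±1}`, `q_{±2}`
    (q1 qm1 q2 qm2 : Submodule ℂ L)
    (hq1 : q1 = ⨆ β ∈ {β : E | β ∈ Φ ∧ htq β = 1}, g β)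
    (hqm1 : qm1 = ⨆ β ∈ {β : E | β ∈ Φ ∧ htq β = -1}, g β)
    (hq2 : q2 = ⨆ β ∈ {β : E | β ∈ Φ ∧ htq β = 2}, g β)
    (hqm2 : qm2 = ⨆ β ∈ {β : E | β ∈ Φ ∧ htq β = -2}, g β)
    -- the element `H_α ∈ 𝔥` representing `α` via the Killing form
    (Hα : L) (hHαh : Hα ∈ h)
    (hHα : ∀ x ∈ h, ev α x = killingForm ℂ L Hα x) :
    -- nondegeneracy of `(Z, X) ↦ κ(H_α, ⁅Z, X⁆)` on `q_1 × q_{-1}`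
    ((∀ Z ∈ q1, (∀ X ∈ qm1, killingForm ℂ L Hα ⁅Z, X⁆ = 0) → Z = 0) ∧
     (∀ X ∈ qm1, (∀ Z ∈ q1, killingForm ℂ L Hα ⁅Z, X⁆ = 0) → X = 0)) ∧
    -- and on `q_2 × q_{-2}`
    ((∀ Z ∈ q2, (∀ X ∈ qm2, killingForm ℂ L Hα ⁅Z, X⁆ = 0) → Z = 0) ∧
     (∀ X ∈ qm2, (∀ Z ∈ q2, killingForm ℂ L Hα ⁅Z, X⁆ = 0) → X = 0)) := by
  have hD : IsRootDecomposition Φ h g ev := ⟨hΦ0, habel, hgne, hev, hgg, hdec, hindh, hindg⟩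
  have hB : IsRootBase Φ Δ n := ⟨hΔΦ, hΔli, hn, hsign⟩
  have hα : IsLongRoot Φ α := ⟨hΔΦ hαΔ, hlong, fun γ hγ ↦ by
    simpa only [corootFunctional_apply] using hcrys α (hΔΦ hαΔ) γ hγ⟩
  subst hNbr hSq hq1 hqm1 hq2 hqm2
  obtain rfl : htq = neighborHeight Δ n α := funext hhtq
  exact ⟨killing_pairing_nondegenerate_general hD hB hα hαΔ hHαh hHα (k := 1) (by norm_num),
    killing_pairing_nondegenerate_general hD hB hα hαΔ hHαh hHα (k := 2) (by norm_num)⟩
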